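/- Assume F ∈ C¹(ℝ,ℝ) with F(0) = 0, F(x) > 0 for all x ≠ 0, and F′(x) = O(1/|log x|) as x → 0⁺. Then there exists ε₂* > 0 such that for every ε ≥ ε₂* the self-consistent system has at least two acims: Lebesgue measure λ satisfies (T_λ^ε)_*λ = λ, and there exists a probability measure μ on [0,1] with μ ≪ λ, λ ≪ μ and μ ≠ λ such that (T_μ^ε)_*μ = μ. -/

import Mathlib

open MeasureTheory

/-- Lebesgue measure on the interval `[0,1]`. -/
noncomputable def lebI : Measure ℝ := volume.restrict (Set.Icc 0 1)

/-- `E_μ = ∫₀¹ x dμ(x)`. -/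
noncomputable def Emu (μ : Measure ℝ) : ℝ := ∫ x in Set.Icc (0:ℝ) 1, x ∂μ

/-- The self-consistent dynamics `T_μ^ε(x) = (2 + ε F(1/E_μ − 2)) x mod 1`. -/
noncomputable def Tsc (ε : ℝ) (F : ℝ → ℝ) (μ : Measure ℝ) (x : ℝ) : ℝ :=
  Int.fract ((2 + ε * F (1 / Emu μ - 2)) * x)

open Filter Set Topology
open scoped ENNReal

/-!
For slope `β > 1`, the measure with density `∑ β⁻ⁿ 𝟙_[0, gₙ)`, where `gₙ` is the orbit of `1` under
`x ↦ βx mod 1`, is invariant; its normalisation is the Parry measure `μ_β`, which is `λ` when `β` is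
an integer. Hence `μ_β` solves the self-consistent system as soon as
`2 + ε F(1 / E(μ_β) - 2) = β`. The mean `E(μ_β)` is continuous in `β`, although the orbit `gₙ` is
only right-continuous: from the left `gₙ` tends to the quasi-greedy orbit, which yields the same
ratio of moments. Since `E(μ_β) < 1 / 2` for `2 < β < 3`, with equality at both ends, some
`β₀ ∈ (2, 3)` has `F(1 / E(μ_β₀) - 2) > 0`. For large `ε` the left-hand side exceeds `β₀` at `β₀`,
while it is `2 < 3` at `β = 3`, so a solution `β > 2` exists in between.
-/

theorem tendsto_mul_nhdsGE {R : Type*} [MulZeroClass R] [Preorder R] [PosMulMono R] [MulPosMono R]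
    [TopologicalSpace R] [ContinuousMul R] {a b : R} (ha : 0 ≤ a) (hb : 0 ≤ b) :
    Tendsto (fun p : R × R => p.1 * p.2) (𝓝[≥] a ×ˢ 𝓝[≥] b) (𝓝[≥] (a * b)) := by
  refine tendsto_nhdsWithin_iff.2 ⟨?_, ?_⟩
  · exact (tendsto_fst.mono_right nhdsWithin_le_nhds).mul
      (tendsto_snd.mono_right nhdsWithin_le_nhds)
  · filter_upwards [prod_mem_prod self_mem_nhdsWithin self_mem_nhdsWithin] with p ⟨hp₁, hp₂⟩
    exact mul_le_mul hp₁ hp₂ hb (ha.trans hp₁)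

theorem tendsto_mul_nhdsLE {R : Type*} [MulZeroClass R] [LinearOrder R] [PosMulMono R]
    [MulPosMono R] [TopologicalSpace R] [ClosedIicTopology R] [ContinuousMul R] {a b : R}
    (ha : 0 ≤ a) (hb : 0 < b) :
    Tendsto (fun p : R × R => p.1 * p.2) (𝓝[≤] a ×ˢ 𝓝[≤] b) (𝓝[≤] (a * b)) := by
  refine tendsto_nhdsWithin_iff.2 ⟨?_, ?_⟩
  · exact (tendsto_fst.mono_right nhdsWithin_le_nhds).mul
      (tendsto_snd.mono_right nhdsWithin_le_nhds)
  · filter_upwards [prod_mem_prod self_mem_nhdsWithin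
      (inter_mem_nhdsWithin _ (Ioi_mem_nhds hb))] with p ⟨hp₁, hp₂, hp₂_pos⟩
    exact mul_le_mul hp₁ hp₂ (le_of_lt hp₂_pos) ha

theorem tendsto_fract_nhdsGE {R : Type*} [Ring R] [LinearOrder R] [IsStrictOrderedRing R]
    [FloorRing R] [TopologicalSpace R] [OrderClosedTopology R] [IsTopologicalAddGroup R] (x : R) :
    Tendsto (Int.fract : R → R) (𝓝[≥] x) (𝓝[≥] (Int.fract x)) := by
  have hsub : Tendsto (fun y : R => y - ⌊x⌋) (𝓝[≥] x) (𝓝[≥] (x - ⌊x⌋)) :=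
    tendsto_nhdsWithin_iff.2 ⟨(tendsto_id.mono_left nhdsWithin_le_nhds).sub_const _,
      eventually_mem_nhdsWithin.mono fun _ hy => sub_le_sub_right (mem_Ici.1 hy) _⟩
  refine hsub.congr' ?_
  filter_upwards [tendsto_pure.1 (tendsto_floor_right_pure_floor x)] with y hy
  rw [Int.fract, hy]

theorem tendsto_one_sub_fract_neg_nhdsLE {R : Type*} [Ring R] [LinearOrder R]
    [IsStrictOrderedRing R] [FloorRing R] [TopologicalSpace R] [OrderClosedTopology R]
    [IsTopologicalAddGroup R] (x : R) :
    Tendsto (fun y : R => 1 - Int.fract (-y)) (𝓝[≤] x) (𝓝[≤] (1 - Int.fract (-x))) := by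
  obtain ⟨hlim, hge⟩ := tendsto_nhdsWithin_iff.1 <|
    (tendsto_fract_nhdsGE (-x)).comp (tendsto_neg_nhdsLE (a := x))
  exact tendsto_nhdsWithin_iff.2
    ⟨hlim.const_sub 1, hge.mono fun _ hy => sub_le_sub_left (mem_Ici.1 hy) 1⟩

/-- The β-transformation, whose iterates generate the greedy β-expansion. -/
noncomputable def betaMap (β x : ℝ) : ℝ := Int.fract (β * x)

/-- The left-continuous variant of the β-transformation, whose iterates generate the quasi-greedy
β-expansion: `1 - Int.fract (-y)` is the representative of `y` modulo `1` in `(0, 1]`. -/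
noncomputable def quasiBetaMap (β x : ℝ) : ℝ := 1 - Int.fract (-(β * x))

/-- The orbit of `1` under the β-transformation: the breakpoints of the Parry density. -/
noncomputable def greedyOrbit (β : ℝ) (n : ℕ) : ℝ := (betaMap β)^[n] 1

/-- The orbit of `1` under the left-continuous β-transformation; it replaces the
greedy orbit in limits from the left in the slope. -/
noncomputable def quasiGreedyOrbit (β : ℝ) (n : ℕ) : ℝ := (quasiBetaMap β)^[n] 1

theorem measurable_betaMap (β : ℝ) : Measurable (betaMap β) :=
  measurable_fract.comp (measurable_const_mul β)

theorem greedyOrbit_zero (β : ℝ) : greedyOrbit β 0 = 1 := rfl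

theorem greedyOrbit_succ (β : ℝ) (n : ℕ) :
    greedyOrbit β (n + 1) = Int.fract (β * greedyOrbit β n) :=
  Function.iterate_succ_apply' _ _ _

theorem quasiGreedyOrbit_succ (β : ℝ) (n : ℕ) :
    quasiGreedyOrbit β (n + 1) = 1 - Int.fract (-(β * quasiGreedyOrbit β n)) :=
  Function.iterate_succ_apply' _ _ _

theorem greedyOrbit_mem_Icc (β : ℝ) (n : ℕ) : greedyOrbit β n ∈ Icc (0 : ℝ) 1 := by
  cases n with
  | zero => exact right_mem_Icc.2 zero_le_one
  | succ n => exact greedyOrbit_succ β n ▸ ⟨Int.fract_nonneg _, (Int.fract_lt_one _).le⟩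

theorem quasiGreedyOrbit_mem_Ioc (β : ℝ) (n : ℕ) : quasiGreedyOrbit β n ∈ Ioc (0 : ℝ) 1 := by
  cases n with
  | zero => exact right_mem_Ioc.2 zero_lt_one
  | succ n =>
    rw [quasiGreedyOrbit_succ]
    exact ⟨sub_pos.2 (Int.fract_lt_one _), sub_le_self _ (Int.fract_nonneg _)⟩

theorem tendsto_greedyOrbit {β : ℝ} (hβ : 0 ≤ β) (n : ℕ) :
    Tendsto (fun b => greedyOrbit b n) (𝓝[≥] β) (𝓝[≥] greedyOrbit β n) := by
  induction n with
  | zero => exact tendsto_nhdsWithin_iff.2 ⟨tendsto_const_nhds, .of_forall fun _ => self_mem_Ici⟩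
  | succ n ih =>
    simp only [greedyOrbit_succ]
    exact (tendsto_fract_nhdsGE _).comp
      ((tendsto_mul_nhdsGE hβ (greedyOrbit_mem_Icc β n).1).comp (tendsto_id.prodMk ih))

theorem tendsto_quasiGreedyOrbit {β : ℝ} (hβ : 0 ≤ β) (n : ℕ) :
    Tendsto (fun b => quasiGreedyOrbit b n) (𝓝[≤] β) (𝓝[≤] quasiGreedyOrbit β n) := by
  induction n with
  | zero => exact tendsto_nhdsWithin_iff.2 ⟨tendsto_const_nhds, .of_forall fun _ => self_mem_Iic⟩
  | succ n ih =>
    simp only [quasiGreedyOrbit_succ]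
    exact (tendsto_one_sub_fract_neg_nhdsLE _).comp
      ((tendsto_mul_nhdsLE hβ (quasiGreedyOrbit_mem_Ioc β n).1).comp (tendsto_id.prodMk ih))

theorem greedyOrbit_eq_quasiGreedyOrbit {β : ℝ} {n : ℕ}
    (h : ∀ m ≤ n, greedyOrbit β m ≠ 0) : greedyOrbit β n = quasiGreedyOrbit β n := by
  induction n with
  | zero => rfl
  | succ n ih =>
    have hne := h (n + 1) le_rfl
    rw [greedyOrbit_succ] at hne
    rw [greedyOrbit_succ, quasiGreedyOrbit_succ, ← ih fun m hm => h m (by omega),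
      Int.fract_neg hne, sub_sub_cancel]

theorem greedyOrbit_add_eq_zero {β : ℝ} {N : ℕ} (h : greedyOrbit β N = 0) (k : ℕ) :
    greedyOrbit β (k + N) = 0 := by
  rw [greedyOrbit] at h
  rw [greedyOrbit, Function.iterate_add_apply, h,
    Function.iterate_fixed (by simp only [betaMap, mul_zero, Int.fract_zero])]

theorem quasiGreedyOrbit_add_of_eq_one {β : ℝ} {N : ℕ} (h : quasiGreedyOrbit β N = 1) (k : ℕ) :
    quasiGreedyOrbit β (k + N) = quasiGreedyOrbit β k := by
  rw [quasiGreedyOrbit] at h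
  rw [quasiGreedyOrbit, Function.iterate_add_apply, h, quasiGreedyOrbit]

theorem quasiGreedyOrbit_succ_eq_one {β : ℝ} {n : ℕ} (hzero : greedyOrbit β (n + 1) = 0)
    (hne : ∀ m ≤ n, greedyOrbit β m ≠ 0) : quasiGreedyOrbit β (n + 1) = 1 := by
  rw [greedyOrbit_succ] at hzero
  rw [quasiGreedyOrbit_succ, ← greedyOrbit_eq_quasiGreedyOrbit hne, Int.fract_neg_eq_zero.2 hzero,
    sub_zero]

theorem greedyOrbit_natCast_succ (k n : ℕ) : greedyOrbit k (n + 1) = 0 :=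
  greedyOrbit_add_eq_zero (by rw [greedyOrbit_succ, greedyOrbit_zero, mul_one, Int.fract_natCast]) n

/-- The generating function `∑ β⁻ⁿ aₙᵖ`. For the greedy orbit, `p = 1` gives the mass and `p = 2`
twice the first moment of the unnormalised Parry measure. -/
noncomputable def discountedMoment (β : ℝ) (a : ℕ → ℝ) (p : ℕ) : ℝ := ∑' n, β⁻¹ ^ n * a n ^ p

section discountedMoment

variable {β : ℝ} {a : ℕ → ℝ}

theorem summable_inv_pow (hβ : 1 < β) : Summable fun n : ℕ => β⁻¹ ^ n :=
  summable_geometric_of_lt_one (inv_nonneg.2 (zero_le_one.trans hβ.le)) (inv_lt_one_of_one_lt₀ hβ)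

theorem norm_inv_pow_mul_pow_le {c x : ℝ} (hc : 0 < c) (hcβ : c ≤ β) (hx : x ∈ Icc (0 : ℝ) 1)
    (p n : ℕ) : ‖β⁻¹ ^ n * x ^ p‖ ≤ c⁻¹ ^ n := by
  have hβ : 0 < β := hc.trans_le hcβ
  have hxp : 0 ≤ x ^ p := pow_nonneg hx.1 p
  rw [Real.norm_of_nonneg (by positivity)]
  calc β⁻¹ ^ n * x ^ p ≤ β⁻¹ ^ n := mul_le_of_le_one_right (by positivity) (pow_le_one₀ hx.1 hx.2)
    _ ≤ c⁻¹ ^ n := by gcongr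

theorem summable_discountedMoment (hβ : 1 < β) (ha : ∀ n, a n ∈ Icc (0 : ℝ) 1) (p : ℕ) :
    Summable fun n => β⁻¹ ^ n * a n ^ p :=
  (summable_inv_pow hβ).of_norm_bounded fun n =>
    norm_inv_pow_mul_pow_le (zero_lt_one.trans hβ) le_rfl (ha n) p n

theorem discountedMoment_pos (hβ : 1 < β) (ha : ∀ n, a n ∈ Icc (0 : ℝ) 1) (ha₀ : a 0 = 1) (p : ℕ) :
    0 < discountedMoment β a p := by
  have hβ₀ : 0 ≤ β⁻¹ := inv_nonneg.2 (zero_le_one.trans hβ.le)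
  exact (summable_discountedMoment hβ ha p).tsum_pos
    (fun n => mul_nonneg (pow_nonneg hβ₀ n) (pow_nonneg (ha n).1 p)) 0 (by simp [ha₀])

theorem inv_pow_mul_pow_succ_le (hβ : 0 ≤ β) {x : ℝ} (hx : x ∈ Icc (0 : ℝ) 1) (p n : ℕ) :
    β⁻¹ ^ n * x ^ (p + 1) ≤ β⁻¹ ^ n * x ^ p :=
  mul_le_mul_of_nonneg_left (pow_le_pow_of_le_one hx.1 hx.2 p.le_succ)
    (pow_nonneg (inv_nonneg.2 hβ) n)

theorem discountedMoment_succ_le (hβ : 1 < β) (ha : ∀ n, a n ∈ Icc (0 : ℝ) 1) (p : ℕ) :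
    discountedMoment β a (p + 1) ≤ discountedMoment β a p :=
  (summable_discountedMoment hβ ha _).tsum_le_tsum
    (fun n => inv_pow_mul_pow_succ_le (zero_le_one.trans hβ.le) (ha n) p n)
    (summable_discountedMoment hβ ha p)

theorem discountedMoment_succ_lt (hβ : 1 < β) (ha : ∀ n, a n ∈ Icc (0 : ℝ) 1) {m : ℕ}
    (hm : a m ∈ Ioo (0 : ℝ) 1) (p : ℕ) :
    discountedMoment β a (p + 1) < discountedMoment β a p :=
  (summable_discountedMoment hβ ha _).tsum_lt_tsum
    (fun n => inv_pow_mul_pow_succ_le (zero_le_one.trans hβ.le) (ha n) p n)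
    (mul_lt_mul_of_pos_left (pow_lt_pow_right_of_lt_one₀ hm.1 hm.2 p.lt_succ_self)
      (pow_pos (inv_pos.2 (zero_lt_one.trans hβ)) m))
    (summable_discountedMoment hβ ha p)

theorem tendsto_discountedMoment (hβ : 1 < β) {ι : Type*} {l : Filter ι} {f : ι → ℝ}
    (hf : Tendsto f l (𝓝 β)) {u : ι → ℕ → ℝ} (hu : ∀ i n, u i n ∈ Icc (0 : ℝ) 1)
    (hlim : ∀ n, Tendsto (fun i => u i n) l (𝓝 (a n))) (p : ℕ) :
    Tendsto (fun i => discountedMoment (f i) (u i) p) l (𝓝 (discountedMoment β a p)) := by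
  obtain ⟨c, hc, hcβ⟩ := exists_between hβ
  have hβ₀ : β ≠ 0 := (zero_lt_one.trans hβ).ne'
  refine tendsto_tsum_of_dominated_convergence (summable_inv_pow hc)
    (fun n => ((hf.inv₀ hβ₀).pow n).mul ((hlim n).pow p)) ?_
  filter_upwards [hf.eventually_const_lt hcβ] with i hi n
  exact norm_inv_pow_mul_pow_le (zero_lt_one.trans hc) hi.le (hu i n) p n

theorem discountedMoment_eq_sum_range {N p : ℕ} (hp : p ≠ 0) (hzero : ∀ k, a (k + N) = 0) :
    discountedMoment β a p = ∑ n ∈ Finset.range N, β⁻¹ ^ n * a n ^ p := by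
  refine tsum_eq_sum fun n hn => ?_
  obtain ⟨k, rfl⟩ := Nat.exists_eq_add_of_le' (not_lt.1 (Finset.mem_range.not.1 hn))
  rw [hzero, zero_pow hp, mul_zero]

theorem one_sub_mul_discountedMoment_eq_sum_range {N p : ℕ}
    (hsummable : Summable fun n => β⁻¹ ^ n * a n ^ p) (hper : ∀ k, a (k + N) = a k) :
    (1 - β⁻¹ ^ N) * discountedMoment β a p = ∑ n ∈ Finset.range N, β⁻¹ ^ n * a n ^ p := by
  have htail : ∑' k, β⁻¹ ^ (k + N) * a (k + N) ^ p = β⁻¹ ^ N * discountedMoment β a p := by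
    rw [discountedMoment, ← tsum_mul_left]
    exact tsum_congr fun k => by rw [hper, pow_add]; ring
  have hsplit := hsummable.sum_add_tsum_nat_add N
  rw [htail, ← discountedMoment] at hsplit
  linarith

end discountedMoment

-- If the greedy orbit hits `0`, the quasi-greedy one repeats its nonzero part periodically, so all
-- moments change by the same factor.
theorem discountedMoment_two_div_one_greedyOrbit {β : ℝ} (hβ : 1 < β) :
    discountedMoment β (greedyOrbit β) 2 / discountedMoment β (greedyOrbit β) 1 =
      discountedMoment β (quasiGreedyOrbit β) 2 / discountedMoment β (quasiGreedyOrbit β) 1 := by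
  by_cases hzero : ∃ n, greedyOrbit β (n + 1) = 0
  · classical
    obtain ⟨n, hn, hmin⟩ : ∃ n, greedyOrbit β (n + 1) = 0 ∧ ∀ m ≤ n, greedyOrbit β m ≠ 0 := by
      refine ⟨Nat.find hzero, Nat.find_spec hzero, fun m hm => ?_⟩
      cases m with
      | zero => exact one_ne_zero
      | succ m => exact Nat.find_min hzero hm
    have hmoment (p : ℕ) (hp : p ≠ 0) : discountedMoment β (greedyOrbit β) p =
        (1 - β⁻¹ ^ (n + 1)) * discountedMoment β (quasiGreedyOrbit β) p := by
      rw [discountedMoment_eq_sum_range hp (greedyOrbit_add_eq_zero hn),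
        one_sub_mul_discountedMoment_eq_sum_range (summable_discountedMoment hβ
          (fun k => Ioc_subset_Icc_self (quasiGreedyOrbit_mem_Ioc β k)) p)
          (quasiGreedyOrbit_add_of_eq_one (quasiGreedyOrbit_succ_eq_one hn hmin))]
      refine Finset.sum_congr rfl fun k hk => ?_
      rw [greedyOrbit_eq_quasiGreedyOrbit fun m hm =>
        hmin m (hm.trans (Finset.mem_range_succ_iff.1 hk))]
    have hfactor : 1 - β⁻¹ ^ (n + 1) ≠ 0 :=
      (sub_pos.2 (pow_lt_one₀ (by positivity) (inv_lt_one_of_one_lt₀ hβ) n.succ_ne_zero)).ne'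
    rw [hmoment 2 two_ne_zero, hmoment 1 one_ne_zero, mul_div_mul_left _ _ hfactor]
  · have hne : ∀ n, greedyOrbit β n ≠ 0
      | 0 => one_ne_zero
      | n + 1 => not_exists.1 hzero n
    have horbit : greedyOrbit β = quasiGreedyOrbit β :=
      funext fun _ => greedyOrbit_eq_quasiGreedyOrbit fun m _ => hne m
    rw [horbit]

theorem continuousAt_discountedMoment_two_div_one {β : ℝ} (hβ : 1 < β) :
    ContinuousAt (fun b => discountedMoment b (greedyOrbit b) 2 /
      discountedMoment b (greedyOrbit b) 1) β := by
  have hβ₀ : 0 ≤ β := zero_le_one.trans hβ.le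
  have hquasi_mem (b : ℝ) (n : ℕ) : quasiGreedyOrbit b n ∈ Icc (0 : ℝ) 1 :=
    Ioc_subset_Icc_self (quasiGreedyOrbit_mem_Ioc b n)
  refine continuousAt_iff_continuous_left_right.2 ⟨?_, ?_⟩
  · have hlim := tendsto_discountedMoment hβ (tendsto_id.mono_left nhdsWithin_le_nhds)
      hquasi_mem fun n => (tendsto_quasiGreedyOrbit hβ₀ n).mono_right nhdsWithin_le_nhds
    have hratio := (hlim 2).div (hlim 1) (discountedMoment_pos hβ (hquasi_mem β) rfl 1).ne'
    rw [ContinuousWithinAt, discountedMoment_two_div_one_greedyOrbit hβ]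
    refine hratio.congr' ?_
    filter_upwards [nhdsWithin_le_nhds (Ioi_mem_nhds hβ)] with b hb
    exact (discountedMoment_two_div_one_greedyOrbit hb).symm
  · have hlim := tendsto_discountedMoment hβ (tendsto_id.mono_left nhdsWithin_le_nhds)
      greedyOrbit_mem_Icc fun n => (tendsto_greedyOrbit hβ₀ n).mono_right nhdsWithin_le_nhds
    exact (hlim 2).div (hlim 1) (discountedMoment_pos hβ (greedyOrbit_mem_Icc β) rfl 1).ne'

theorem map_fract_restrict_Ico_of_le_one {a : ℝ} (ha : a ≤ 1) :
    Measure.map Int.fract (volume.restrict (Ico 0 a)) = volume.restrict (Ico 0 a) := by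
  rw [Measure.map_congr (g := id), Measure.map_id]
  filter_upwards [ae_restrict_mem measurableSet_Ico] with x hx
  exact Int.fract_eq_self.2 ⟨hx.1, hx.2.trans_le ha⟩

theorem map_fract_restrict_Ico_add_one {a : ℝ} (ha : 0 ≤ a) :
    Measure.map Int.fract (volume.restrict (Ico 0 (a + 1))) =
      volume.restrict (Ico 0 1) + Measure.map Int.fract (volume.restrict (Ico (0 : ℝ) a)) := by
  have hshift : Measure.map (· + 1) (volume.restrict (Ico 0 a)) =
      volume.restrict (Ico (1 : ℝ) (a + 1)) := by
    have h := ((measurePreserving_add_right volume (1 : ℝ)).restrict_preimage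
      (measurableSet_Ico (a := 1) (b := a + 1))).map_eq
    simpa only [preimage_add_const_Ico, sub_self, add_sub_cancel_right] using h
  rw [← Ico_union_Ico_eq_Ico zero_le_one (le_add_of_nonneg_left ha),
    Measure.restrict_union Ico_disjoint_Ico_same measurableSet_Ico,
    Measure.map_add _ _ measurable_fract,
    map_fract_restrict_Ico_of_le_one le_rfl, ← hshift,
    Measure.map_map measurable_fract (measurable_add_const 1)]
  simp only [Function.comp_def, Int.fract_add_one]

theorem map_fract_restrict_Ico {a : ℝ} (ha : 0 ≤ a) :
    Measure.map Int.fract (volume.restrict (Ico 0 a)) =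
      (⌊a⌋₊ : ℝ≥0∞) • volume.restrict (Ico 0 1) + volume.restrict (Ico 0 (Int.fract a)) := by
  obtain ⟨n, r, hr, rfl⟩ : ∃ (n : ℕ) (r : ℝ), r ∈ Ico (0 : ℝ) 1 ∧ a = r + n :=
    ⟨⌊a⌋₊, Int.fract a, ⟨Int.fract_nonneg a, Int.fract_lt_one a⟩, by
      rw [natCast_floor_eq_intCast_floor ha, Int.fract_add_floor]⟩
  rw [Nat.floor_add_natCast hr.1, Nat.floor_eq_zero.2 hr.2, zero_add, Int.fract_add_natCast,
    Int.fract_eq_self.2 hr]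
  clear ha
  induction n with
  | zero =>
    rw [Nat.cast_zero, add_zero, Nat.cast_zero, zero_smul, zero_add,
      map_fract_restrict_Ico_of_le_one hr.2.le]
  | succ n ih =>
    rw [Nat.cast_succ, ← add_assoc, map_fract_restrict_Ico_add_one (add_nonneg hr.1 n.cast_nonneg),
      ih, Nat.cast_succ, add_smul, one_smul]
    abel

theorem map_mul_left_restrict_Ico {β : ℝ} (hβ : 0 < β) (a : ℝ) :
    Measure.map (β * ·) (volume.restrict (Ico 0 a)) =
      ENNReal.ofReal β⁻¹ • volume.restrict (Ico 0 (β * a)) := by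
  have hpre : (β * ·) ⁻¹' Ico 0 (β * a) = Ico 0 a := by
    rw [preimage_const_mul_Ico₀ _ _ hβ, zero_div, mul_div_cancel_left₀ _ hβ.ne']
  rw [← hpre, ← Measure.restrict_map (measurable_const_mul β) measurableSet_Ico,
    Real.map_volume_mul_left hβ.ne', abs_of_pos (inv_pos.2 hβ), Measure.restrict_smul]

theorem map_betaMap_restrict_Ico {β : ℝ} (hβ : 0 < β) {a : ℝ} (ha : 0 ≤ a) :
    Measure.map (betaMap β) (volume.restrict (Ico 0 a)) =
      ENNReal.ofReal β⁻¹ • ((⌊β * a⌋₊ : ℝ≥0∞) • volume.restrict (Ico 0 1) +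
        volume.restrict (Ico 0 (betaMap β a))) := by
  have hcomp : betaMap β = Int.fract ∘ (β * ·) := rfl
  rw [hcomp, ← Measure.map_map measurable_fract (measurable_const_mul β),
    map_mul_left_restrict_Ico hβ, Measure.map_smul,
    map_fract_restrict_Ico (mul_nonneg hβ.le ha), Function.comp_apply]

/-- The unnormalised Parry measure, with density `∑ β⁻ⁿ 𝟙_[0, gₙ)` for the greedy orbit `g` of
`1`. -/
noncomputable def greedyMeasure (β : ℝ) : Measure ℝ :=
  Measure.sum fun n => ENNReal.ofReal β⁻¹ ^ n • volume.restrict (Ico 0 (greedyOrbit β n))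

/-- The Parry measure: the invariant probability measure of the β-transformation that is equivalent
to Lebesgue measure on `[0, 1]`. -/
noncomputable def parryMeasure (β : ℝ) : Measure ℝ := (greedyMeasure β univ)⁻¹ • greedyMeasure β

theorem lebI_eq_restrict_Ico : lebI = volume.restrict (Ico 0 1) :=
  (Measure.restrict_congr_set Ico_ae_eq_Icc).symm

section parryMeasure

variable {β : ℝ}

-- The partial sums telescope, since `β⁻ⁿ⁻¹ ⌊β gₙ⌋ = β⁻ⁿ gₙ - β⁻ⁿ⁻¹ gₙ₊₁`.
theorem hasSum_greedyDigits (hβ : 1 < β) :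
    HasSum (fun n => β⁻¹ ^ (n + 1) * (⌊β * greedyOrbit β n⌋₊ : ℝ)) 1 := by
  have hβ₀ : 0 < β := zero_lt_one.trans hβ
  have hpartial (n : ℕ) : ∑ i ∈ Finset.range n, β⁻¹ ^ (i + 1) * (⌊β * greedyOrbit β i⌋₊ : ℝ) =
      1 - β⁻¹ ^ n * greedyOrbit β n ^ 1 := by
    have hstep (i : ℕ) : β⁻¹ ^ (i + 1) * (⌊β * greedyOrbit β i⌋₊ : ℝ) =
        β⁻¹ ^ i * greedyOrbit β i - β⁻¹ ^ (i + 1) * greedyOrbit β (i + 1) := by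
      rw [natCast_floor_eq_intCast_floor (mul_nonneg hβ₀.le (greedyOrbit_mem_Icc β i).1),
        greedyOrbit_succ, Int.fract]
      have hpow : β⁻¹ ^ i = β⁻¹ ^ (i + 1) * β := by rw [pow_succ, inv_mul_cancel_right₀ hβ₀.ne']
      rw [hpow]
      ring
    rw [Finset.sum_congr rfl fun i _ => hstep i, Finset.sum_range_sub', greedyOrbit_zero]
    ring
  rw [hasSum_iff_tendsto_nat_of_nonneg fun n => by positivity]
  simp only [hpartial]
  simpa only [sub_zero] using
    (summable_discountedMoment hβ (greedyOrbit_mem_Icc β) 1).tendsto_atTop_zero.const_sub 1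

theorem tsum_ofReal_greedyDigits (hβ : 1 < β) :
    ∑' n, ENNReal.ofReal β⁻¹ ^ (n + 1) * (⌊β * greedyOrbit β n⌋₊ : ℝ≥0∞) = 1 := by
  have hβ₀ : 0 ≤ β⁻¹ := inv_nonneg.2 (zero_le_one.trans hβ.le)
  have hdigits := hasSum_greedyDigits hβ
  rw [← ENNReal.ofReal_one, ← hdigits.tsum_eq,
    ENNReal.ofReal_tsum_of_nonneg (fun n => by positivity) hdigits.summable]
  refine tsum_congr fun n => ?_
  rw [ENNReal.ofReal_mul (pow_nonneg hβ₀ _), ENNReal.ofReal_pow hβ₀, ENNReal.ofReal_natCast]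

theorem map_betaMap_greedyMeasure (hβ : 1 < β) :
    Measure.map (betaMap β) (greedyMeasure β) = greedyMeasure β := by
  let ν : ℕ → Measure ℝ := fun n =>
    ENNReal.ofReal β⁻¹ ^ n • volume.restrict (Ico 0 (greedyOrbit β n))
  have hsum : greedyMeasure β = Measure.sum ν := rfl
  have hterm (n : ℕ) : Measure.map (betaMap β) (ν n) =
      (ENNReal.ofReal β⁻¹ ^ (n + 1) * (⌊β * greedyOrbit β n⌋₊ : ℝ≥0∞)) • ν 0 + ν (n + 1) := by
    simp only [ν, Measure.map_smul, greedyOrbit_succ, greedyOrbit_zero,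
      map_betaMap_restrict_Ico (zero_lt_one.trans hβ) (greedyOrbit_mem_Icc β n).1,
      betaMap, smul_add, smul_smul, pow_succ, pow_zero, mul_assoc, mul_one]
  rw [hsum, Measure.map_sum (measurable_betaMap β).aemeasurable]
  refine Measure.ext fun s hs => ?_
  rw [Measure.sum_apply _ hs, Measure.sum_apply _ hs, tsum_eq_zero_add' (f := fun n => ν n s)
    ENNReal.summable]
  simp only [hterm, Measure.add_apply, Measure.smul_apply, smul_eq_mul, ENNReal.tsum_add,
    ENNReal.tsum_mul_right, tsum_ofReal_greedyDigits hβ, one_mul]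

theorem map_betaMap_parryMeasure (hβ : 1 < β) :
    Measure.map (betaMap β) (parryMeasure β) = parryMeasure β := by
  rw [parryMeasure, Measure.map_smul, map_betaMap_greedyMeasure hβ]

theorem greedyMeasure_univ (hβ : 1 < β) :
    greedyMeasure β univ = ENNReal.ofReal (discountedMoment β (greedyOrbit β) 1) := by
  have hβ₀ : 0 ≤ β⁻¹ := inv_nonneg.2 (zero_le_one.trans hβ.le)
  rw [greedyMeasure, Measure.sum_apply _ .univ, discountedMoment, ENNReal.ofReal_tsum_of_nonneg
    (fun n => mul_nonneg (pow_nonneg hβ₀ n) (pow_nonneg (greedyOrbit_mem_Icc β n).1 1))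
    (summable_discountedMoment hβ (greedyOrbit_mem_Icc β) 1)]
  refine tsum_congr fun n => ?_
  rw [Measure.smul_apply, Measure.restrict_apply_univ, Real.volume_Ico, sub_zero, smul_eq_mul,
    ENNReal.ofReal_mul (pow_nonneg hβ₀ n), ENNReal.ofReal_pow hβ₀, pow_one]

theorem greedyMeasure_univ_ne_top (hβ : 1 < β) : greedyMeasure β univ ≠ ∞ :=
  greedyMeasure_univ hβ ▸ ENNReal.ofReal_ne_top

theorem greedyMeasure_univ_ne_zero (hβ : 1 < β) : greedyMeasure β univ ≠ 0 :=
  greedyMeasure_univ hβ ▸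
    (ENNReal.ofReal_pos.2 (discountedMoment_pos hβ (greedyOrbit_mem_Icc β) rfl 1)).ne'

theorem isProbabilityMeasure_parryMeasure (hβ : 1 < β) : IsProbabilityMeasure (parryMeasure β) :=
  ⟨ENNReal.inv_mul_cancel (greedyMeasure_univ_ne_zero hβ) (greedyMeasure_univ_ne_top hβ)⟩

theorem parryMeasure_absolutelyContinuous (β : ℝ) : parryMeasure β ≪ lebI := by
  rw [lebI_eq_restrict_Ico]
  refine (Measure.absolutelyContinuous_sum_left fun n => ?_).smul_left _
  exact (Measure.restrict_mono (Ico_subset_Ico_right (greedyOrbit_mem_Icc β n).2)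
    le_rfl).absolutelyContinuous.smul_left _

theorem absolutelyContinuous_parryMeasure (hβ : 1 < β) : lebI ≪ parryMeasure β := by
  have hgreedy : lebI ≪ greedyMeasure β := by
    refine Measure.absolutelyContinuous_sum_right 0 ?_
    rw [pow_zero, one_smul, greedyOrbit_zero, ← lebI_eq_restrict_Ico]
  exact hgreedy.trans (Measure.absolutelyContinuous_smul
    (ENNReal.inv_ne_zero.2 (greedyMeasure_univ_ne_top hβ)))

theorem integral_id_restrict_Ico {a : ℝ} (ha : 0 ≤ a) : ∫ x in Ico 0 a, x = a ^ 2 / 2 := by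
  rw [integral_Ico_eq_integral_Ioc, ← intervalIntegral.integral_of_le ha, integral_id,
    zero_pow two_ne_zero, sub_zero]

theorem greedyMeasure_restrict_Icc (β : ℝ) :
    (greedyMeasure β).restrict (Icc 0 1) = greedyMeasure β := by
  rw [greedyMeasure, Measure.restrict_sum _ measurableSet_Icc]
  congr 1 with n : 1
  rw [Measure.restrict_smul, Measure.restrict_restrict measurableSet_Icc,
    inter_eq_self_of_subset_right]
  exact Ico_subset_Icc_self.trans (Icc_subset_Icc_right (greedyOrbit_mem_Icc β n).2)

theorem Emu_greedyMeasure (hβ : 1 < β) :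
    Emu (greedyMeasure β) = discountedMoment β (greedyOrbit β) 2 / 2 := by
  have hβ₀ : 0 ≤ β⁻¹ := inv_nonneg.2 (zero_le_one.trans hβ.le)
  have : IsFiniteMeasure (greedyMeasure β) := ⟨(greedyMeasure_univ_ne_top hβ).lt_top⟩
  have hint : Integrable (fun x : ℝ => x) (greedyMeasure β) := by
    rw [← greedyMeasure_restrict_Icc]
    refine Integrable.of_bound (C := 1) measurable_id.aestronglyMeasurable ?_
    filter_upwards [ae_restrict_mem measurableSet_Icc] with x hx
    exact (Real.norm_of_nonneg hx.1).trans_le hx.2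
  rw [Emu, greedyMeasure_restrict_Icc, greedyMeasure, integral_sum_measure hint, discountedMoment,
    ← tsum_div_const]
  refine tsum_congr fun n => ?_
  rw [integral_smul_measure, integral_id_restrict_Ico (greedyOrbit_mem_Icc β n).1,
    ENNReal.toReal_pow, ENNReal.toReal_ofReal hβ₀, smul_eq_mul, mul_div_assoc]

theorem Emu_parryMeasure (hβ : 1 < β) :
    Emu (parryMeasure β) =
      discountedMoment β (greedyOrbit β) 2 / discountedMoment β (greedyOrbit β) 1 / 2 := by
  rw [Emu, parryMeasure, Measure.restrict_smul, integral_smul_measure, ← Emu, Emu_greedyMeasure hβ,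
    greedyMeasure_univ hβ, ENNReal.toReal_inv, ENNReal.toReal_ofReal
      (discountedMoment_pos hβ (greedyOrbit_mem_Icc β) rfl 1).le, smul_eq_mul]
  ring

theorem continuousAt_Emu_parryMeasure (hβ : 1 < β) :
    ContinuousAt (fun b => Emu (parryMeasure b)) β := by
  refine ((continuousAt_discountedMoment_two_div_one hβ).div_const 2).congr ?_
  filter_upwards [Ioi_mem_nhds hβ] with b hb using (Emu_parryMeasure hb).symm

theorem Emu_parryMeasure_pos (hβ : 1 < β) : 0 < Emu (parryMeasure β) := by
  have hpos := discountedMoment_pos hβ (greedyOrbit_mem_Icc β) (greedyOrbit_zero β)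
  rw [Emu_parryMeasure hβ]
  exact half_pos (div_pos (hpos 2) (hpos 1))

theorem Emu_parryMeasure_le_half (hβ : 1 < β) : Emu (parryMeasure β) ≤ 1 / 2 := by
  have hpos := discountedMoment_pos hβ (greedyOrbit_mem_Icc β) (greedyOrbit_zero β) 1
  rw [Emu_parryMeasure hβ]
  gcongr
  exact (div_le_one hpos).2 (discountedMoment_succ_le hβ (greedyOrbit_mem_Icc β) 1)

theorem Emu_parryMeasure_lt_half (hβ : 1 < β) (hfract : Int.fract β ≠ 0) :
    Emu (parryMeasure β) < 1 / 2 := by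
  have hpos := discountedMoment_pos hβ (greedyOrbit_mem_Icc β) (greedyOrbit_zero β) 1
  have horbit : greedyOrbit β 1 ∈ Ioo (0 : ℝ) 1 := by
    rw [greedyOrbit_succ, greedyOrbit_zero, mul_one]
    exact ⟨(Int.fract_nonneg β).lt_of_ne' hfract, Int.fract_lt_one β⟩
  rw [Emu_parryMeasure hβ]
  gcongr
  exact (div_lt_one hpos).2 (discountedMoment_succ_lt hβ (greedyOrbit_mem_Icc β) horbit 1)

end parryMeasure

theorem greedyMeasure_natCast (k : ℕ) : greedyMeasure k = lebI := by
  refine Measure.ext fun s hs => ?_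
  rw [greedyMeasure, Measure.sum_apply _ hs, tsum_eq_zero_add' ENNReal.summable]
  simp only [greedyOrbit_natCast_succ, greedyOrbit_zero, Ico_self, Measure.restrict_empty,
    smul_zero, Measure.coe_zero, Pi.zero_apply, tsum_zero, add_zero, pow_zero, one_smul,
    lebI_eq_restrict_Ico]

theorem parryMeasure_natCast (k : ℕ) : parryMeasure k = lebI := by
  rw [parryMeasure, greedyMeasure_natCast, lebI, Measure.restrict_apply_univ, Real.volume_Icc,
    sub_zero, ENNReal.ofReal_one, inv_one, one_smul]

theorem map_betaMap_natCast_lebI {k : ℕ} (hk : 1 < k) : Measure.map (betaMap k) lebI = lebI := by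
  simpa only [parryMeasure_natCast] using map_betaMap_parryMeasure (Nat.one_lt_cast.2 hk)

theorem Emu_lebI : Emu lebI = 1 / 2 := by
  rw [Emu, lebI, Measure.restrict_restrict measurableSet_Icc, inter_self,
    integral_Icc_eq_integral_Ico, integral_id_restrict_Ico zero_le_one, one_pow]

theorem Tsc_eq_betaMap (ε : ℝ) (F : ℝ → ℝ) (μ : Measure ℝ) :
    Tsc ε F μ = betaMap (2 + ε * F (1 / Emu μ - 2)) := rfl

theorem map_Tsc_lebI (ε : ℝ) {F : ℝ → ℝ} (hF₀ : F 0 = 0) :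
    Measure.map (Tsc ε F lebI) lebI = lebI := by
  rw [Tsc_eq_betaMap, Emu_lebI, one_div_one_div, sub_self, hF₀, mul_zero, add_zero]
  exact map_betaMap_natCast_lebI one_lt_two

/-- The argument `1 / E - 2` of the coupling function `F` at the Parry measure of slope `β`. -/
noncomputable def parryCoupling (β : ℝ) : ℝ := 1 / Emu (parryMeasure β) - 2

theorem continuousOn_parryCoupling : ContinuousOn parryCoupling (Ioi 1) := fun _ hβ =>
  ((continuousAt_const.div (continuousAt_Emu_parryMeasure hβ)
    (Emu_parryMeasure_pos hβ).ne').sub continuousAt_const).continuousWithinAt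

theorem parryCoupling_nonneg {β : ℝ} (hβ : 1 < β) : 0 ≤ parryCoupling β := by
  rw [parryCoupling, sub_nonneg, le_one_div two_pos (Emu_parryMeasure_pos hβ)]
  exact Emu_parryMeasure_le_half hβ

theorem parryCoupling_pos {β : ℝ} (hβ : 1 < β) (hfract : Int.fract β ≠ 0) :
    0 < parryCoupling β := by
  rw [parryCoupling, sub_pos, lt_one_div two_pos (Emu_parryMeasure_pos hβ)]
  exact Emu_parryMeasure_lt_half hβ hfract

theorem parryCoupling_natCast (k : ℕ) : parryCoupling k = 0 := by
  rw [parryCoupling, parryMeasure_natCast, Emu_lebI, one_div_one_div, sub_self]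

theorem exists_apply_parryCoupling_pos {F : ℝ → ℝ} (hFpos : ∃ᶠ x in 𝓝[>] 0, 0 < F x) :
    ∃ β ∈ Ioo (2 : ℝ) 3, 0 < F (parryCoupling β) := by
  have hfract : Int.fract (5 / 2 : ℝ) ≠ 0 := by norm_num
  have hpos : 0 < parryCoupling (5 / 2) := parryCoupling_pos (by norm_num) hfract
  have htwo : parryCoupling 2 = 0 := parryCoupling_natCast 2
  obtain ⟨x, hFx, hx⟩ := (hFpos.and_eventually (Ioo_mem_nhdsGT hpos)).exists
  obtain ⟨β, hβ, rfl⟩ := intermediate_value_Ioo (by norm_num : (2 : ℝ) ≤ 5 / 2)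
    (continuousOn_parryCoupling.mono fun b hb => one_lt_two.trans_le hb.1) (htwo.symm ▸ hx)
  exact ⟨β, ⟨hβ.1, hβ.2.trans (by norm_num)⟩, hFx⟩

theorem exists_selfConsistent_slope {F : ℝ → ℝ} (hF : ContinuousOn F (Ici 0)) (hF₀ : F 0 = 0)
    {β₀ ε : ℝ} (hβ₀ : β₀ ∈ Ioo (2 : ℝ) 3) (hε : 1 ≤ ε * F (parryCoupling β₀)) :
    ∃ β > 2, 2 + ε * F (parryCoupling β) = β := by
  have hcont : ContinuousOn (fun b => 2 + ε * F (parryCoupling b)) (Icc β₀ 3) := by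
    have hone {b : ℝ} (hb : b ∈ Icc β₀ 3) : 1 < b := one_lt_two.trans (hβ₀.1.trans_le hb.1)
    exact continuousOn_const.add (continuousOn_const.mul <| hF.comp
      (continuousOn_parryCoupling.mono fun _ => hone) fun _ hb => parryCoupling_nonneg (hone hb))
  have hthree : parryCoupling 3 = 0 := parryCoupling_natCast 3
  obtain ⟨β, hβ, hfix⟩ := exists_mem_Icc_isFixedPt hcont hβ₀.2.le (by linarith [hβ₀.2])
    (by rw [hthree, hF₀]; norm_num)
  exact ⟨β, hβ₀.1.trans_le hβ.1, hfix⟩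

theorem stmt2_general {F : ℝ → ℝ} (hF : ContinuousOn F (Ici 0)) (hF₀ : F 0 = 0)
    (hFpos : ∃ᶠ x in 𝓝[>] 0, 0 < F x) :
    ∃ ε₂ > (0 : ℝ), ∀ ε : ℝ, ε₂ ≤ ε →
      Measure.map (Tsc ε F lebI) lebI = lebI ∧
      ∃ μ : Measure ℝ, IsProbabilityMeasure μ ∧ μ ≪ lebI ∧ lebI ≪ μ ∧ μ ≠ lebI ∧
        Measure.map (Tsc ε F μ) μ = μ := by
  obtain ⟨β₀, hβ₀, hpos⟩ := exists_apply_parryCoupling_pos hFpos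
  refine ⟨1 / F (parryCoupling β₀), one_div_pos.2 hpos, fun ε hε => ⟨map_Tsc_lebI ε hF₀, ?_⟩⟩
  obtain ⟨β, hβ, hfix⟩ := exists_selfConsistent_slope hF hF₀ hβ₀ ((div_le_iff₀ hpos).1 hε)
  have hβ₁ : 1 < β := one_lt_two.trans hβ
  refine ⟨parryMeasure β, isProbabilityMeasure_parryMeasure hβ₁,
    parryMeasure_absolutelyContinuous β, absolutelyContinuous_parryMeasure hβ₁, fun hleb => ?_, ?_⟩
  · rw [parryCoupling, hleb, Emu_lebI, one_div_one_div, sub_self, hF₀, mul_zero, add_zero] at hfix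
    exact hβ.ne hfix
  · rw [Tsc_eq_betaMap, ← parryCoupling, hfix, map_betaMap_parryMeasure hβ₁]

/-- For strong self-consistency, at least two acims exist: Lebesgue and a measure
equivalent to, but different from, Lebesgue. -/
theorem stmt2 (F : ℝ → ℝ) (hF : ContDiff ℝ 1 F) (hF0 : F 0 = 0)
    (hFpos : ∀ x : ℝ, x ≠ 0 → 0 < F x)
    (hF' : ∃ C > 0, ∃ x₀ ∈ Set.Ioo (0:ℝ) 1, ∀ x : ℝ, 0 < x → x < x₀ →
      |deriv F x| ≤ C / |Real.log x|) :
    ∃ ε₂ > (0:ℝ), ∀ ε : ℝ, ε₂ ≤ ε →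
      Measure.map (Tsc ε F lebI) lebI = lebI ∧
      ∃ μ : Measure ℝ, IsProbabilityMeasure μ ∧ μ ≪ lebI ∧ lebI ≪ μ ∧ μ ≠ lebI ∧
        Measure.map (Tsc ε F μ) μ = μ := by
  have hev : ∀ᶠ x in 𝓝[>] 0, 0 < F x := eventually_mem_nhdsWithin.mono fun x hx => hFpos x hx.ne'
  exact stmt2_general hF.continuous.continuousOn hF0 hev.frequently
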